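/- arXiv:math/0401034 — 4 statements merged into one kernel-verified Lean document; each statement's English description precedes it below -/
import Mathlib

section
/- Let R be a commutative ring, L a Lie algebra over R, and m : L → L → L an R-bilinear product that is commutative and associative. For X, Z, W ∈ L set P_X(Z,W) := ⁅X, m Z W⁆ − m ⁅X,Z⁆ W − m Z ⁅X,W⁆. Then for all X, Y, Z, W ∈ L the nine-term Gerstenhaber-infinity expression satisfies the identity G(X,Y,Z,W) = P_{m X Y}(Z,W) − m X (P_Y(Z,W)) − m Y (P_X(Z,W)). -/
/-- The Leibniz defect `P_X(Z,W) = ⁅X, m Z W⁆ − m ⁅X,Z⁆ W − m Z ⁅X,W⁆`. -/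
def leibnizDefect {R : Type*} {L : Type*} [CommRing R] [LieRing L] [LieAlgebra R L]
    (m : L →ₗ[R] L →ₗ[R] L) (X Z W : L) : L :=
  ⁅X, m Z W⁆ - m ⁅X, Z⁆ W - m Z ⁅X, W⁆

/-- The nine-term Gerstenhaber-infinity expression `[μ₂,μ₂]_{G∞}(X,Y,Z,W)`. -/
def gerstExpr {R : Type*} {L : Type*} [CommRing R] [LieRing L] [LieAlgebra R L]
    (m : L →ₗ[R] L →ₗ[R] L) (X Y Z W : L) : L :=
  ⁅m X Y, m Z W⁆ - m ⁅m X Y, Z⁆ W - m Z ⁅m X Y, W⁆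
    - m X ⁅Y, m Z W⁆ - m ⁅X, m Z W⁆ Y
    + m X (m Z ⁅Y, W⁆) + m X (m ⁅Y, Z⁆ W)
    + m ⁅X, Z⁆ (m Y W) + m ⁅X, W⁆ (m Y Z)

/-- For a commutative associative bilinear product `m` on a Lie algebra `L`,
the nine-term Gerstenhaber-infinity expression equals
`P_{m X Y}(Z,W) − m X (P_Y(Z,W)) − m Y (P_X(Z,W))`. -/
theorem gerstExpr_eq_leibnizDefect_combination
    (R : Type*) (L : Type*) [CommRing R] [LieRing L] [LieAlgebra R L]
    (m : L →ₗ[R] L →ₗ[R] L)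
    (hcomm : ∀ X Y : L, m X Y = m Y X)
    (hassoc : ∀ X Y Z : L, m (m X Y) Z = m X (m Y Z)) :
    ∀ X Y Z W : L,
      gerstExpr m X Y Z W =
        leibnizDefect m (m X Y) Z W
          - m X (leibnizDefect m Y Z W)
          - m Y (leibnizDefect m X Z W) := by
  intro X Y Z W
  have h1 : m ⁅X, Z⁆ (m Y W) = m Y (m ⁅X, Z⁆ W) := by
    rw [← hassoc, hcomm ⁅X, Z⁆ Y, hassoc]
  have h2 : m ⁅X, W⁆ (m Y Z) = m Y (m Z ⁅X, W⁆) := by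
    rw [hcomm, hassoc]
  have h3 : m ⁅X, m Z W⁆ Y = m Y ⁅X, m Z W⁆ := hcomm _ _
  simp only [gerstExpr, leibnizDefect, map_sub, h1, h2, h3]
  abel
end

section
/- Let R be a commutative ring, L a Lie algebra over R, and m : L → L → L an R-bilinear product that is commutative and associative. Then the nine-term Gerstenhaber-infinity expression G(X,Y,Z,W) vanishes for all X, Y, Z, W ∈ L if and only if the Hertling–Manin F-manifold axiom holds: P_{m X Y}(Z,W) = m X (P_Y(Z,W)) + m Y (P_X(Z,W)) for all X, Y, Z, W ∈ L. This is the paper's assertion that the structure defined by the equation [μ₂,μ₂]_{G∞} = 0 is precisely the F-manifold structure of Hertling and Manin. -/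
/-- For a commutative associative bilinear product `m` on a Lie algebra `L`,
the Gerstenhaber-infinity expression vanishes identically if and only if the
Hertling–Manin F-manifold axiom
`P_{m X Y}(Z,W) = m X (P_Y(Z,W)) + m Y (P_X(Z,W))` holds. -/
theorem gerstExpr_vanishes_iff_FManifold
    (R : Type*) (L : Type*) [CommRing R] [LieRing L] [LieAlgebra R L]
    (m : L →ₗ[R] L →ₗ[R] L)
    (hcomm : ∀ X Y : L, m X Y = m Y X)
    (hassoc : ∀ X Y Z : L, m (m X Y) Z = m X (m Y Z)) :
    (∀ X Y Z W : L, gerstExpr m X Y Z W = 0) ↔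
    (∀ X Y Z W : L,
      leibnizDefect m (m X Y) Z W =
        m X (leibnizDefect m Y Z W) + m Y (leibnizDefect m X Z W)) := by
  have key : ∀ X Y Z W : L, gerstExpr m X Y Z W =
      leibnizDefect m (m X Y) Z W -
        (m X (leibnizDefect m Y Z W) + m Y (leibnizDefect m X Z W)) := by
    intro X Y Z W
    have h1 : m ⁅X, m Z W⁆ Y = m Y ⁅X, m Z W⁆ := hcomm _ _
    have h2 : m ⁅X, W⁆ (m Y Z) = m Y (m Z ⁅X, W⁆) := by
      rw [hcomm, hassoc]
    have h3 : m ⁅X, Z⁆ (m Y W) = m Y (m ⁅X, Z⁆ W) := by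
      rw [← hassoc, hcomm ⁅X, Z⁆ Y, hassoc]
    simp only [gerstExpr, leibnizDefect, map_sub, h1, h2, h3]
    abel
  simp only [key, sub_eq_zero]
end

section
/- Let k be a commutative ring, n a natural number, and π : Fin n → Fin n → MvPolynomial (Fin n) k an antisymmetric matrix of polynomials (π j i = −π i j for all i, j). Define the bracket {f,g} := Σ_{i,j} π i j * (pderiv i f) * (pderiv j g) on MvPolynomial (Fin n) k. Then for all polynomials f, g, h one has the Jacobiator formula: {f,{g,h}} + {g,{h,f}} + {h,{f,g}} = Σ_{a,b,c} J(a,b,c) * (pderiv a f) * (pderiv b g) * (pderiv c h), where J(a,b,c) := Σ_j ( π a j * pderiv j (π b c) + π b j * pderiv j (π c a) + π c j * pderiv j (π a b) ). -/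
open MvPolynomial

/-- The bracket `{f,g} = Σ_{i,j} π i j * ∂_i f * ∂_j g` associated with a bivector `π`. -/
noncomputable def bivectorBracket {k : Type*} [CommRing k] {n : ℕ}
    (π : Fin n → Fin n → MvPolynomial (Fin n) k)
    (f g : MvPolynomial (Fin n) k) : MvPolynomial (Fin n) k :=
  ∑ i : Fin n, ∑ j : Fin n, π i j * pderiv i f * pderiv j g

/-- The Schouten trivector `J(a,b,c) = Σ_j (π a j ∂_j π b c + π b j ∂_j π c a + π c j ∂_j π a b)`. -/
noncomputable def schoutenTrivector {k : Type*} [CommRing k] {n : ℕ}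
    (π : Fin n → Fin n → MvPolynomial (Fin n) k)
    (a b c : Fin n) : MvPolynomial (Fin n) k :=
  ∑ j : Fin n,
    (π a j * pderiv j (π b c) + π b j * pderiv j (π c a) + π c j * pderiv j (π a b))

section Aux

variable {k : Type*} [CommRing k] {n : ℕ}

/-- First-order part of the nested bracket. -/
noncomputable def auxT (π : Fin n → Fin n → MvPolynomial (Fin n) k)
    (f g h : MvPolynomial (Fin n) k) : MvPolynomial (Fin n) k :=
  ∑ a : Fin n, ∑ b : Fin n, ∑ c : Fin n, ∑ j : Fin n,
    π a j * pderiv j (π b c) * pderiv a f * pderiv b g * pderiv c h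

/-- Second-order part of the nested bracket. -/
noncomputable def auxS (π : Fin n → Fin n → MvPolynomial (Fin n) k)
    (f g h : MvPolynomial (Fin n) k) : MvPolynomial (Fin n) k :=
  ∑ a : Fin n, ∑ b : Fin n, ∑ c : Fin n, ∑ j : Fin n,
    π a j * π b c * pderiv a f * pderiv j (pderiv b g) * pderiv c h

theorem pderiv_comm_aux (i j : Fin n) (f : MvPolynomial (Fin n) k) :
    pderiv i (pderiv j f) = pderiv j (pderiv i f) := by
  have h : ⁅(pderiv i : Derivation k (MvPolynomial (Fin n) k) (MvPolynomial (Fin n) k)),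
      (pderiv j : Derivation k (MvPolynomial (Fin n) k) (MvPolynomial (Fin n) k))⁆ = 0 := by
    apply MvPolynomial.derivation_ext
    intro l
    simp [Derivation.commutator_apply, pderiv_X, Pi.single_apply]
    split_ifs <;> simp
  have h2 := congrArg (fun D => D f) h
  simpa [Derivation.commutator_apply, sub_eq_zero] using h2

theorem auxS_symm (π : Fin n → Fin n → MvPolynomial (Fin n) k)
    (hanti : ∀ i j : Fin n, π j i = - π i j) (f g h : MvPolynomial (Fin n) k) :
    auxS π f g h = auxS π h g f := by
  unfold auxS
  have key := Finset.sum_comm (s := Finset.univ) (t := Finset.univ)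
    (f := fun p q : Fin n × Fin n =>
      π q.1 p.2 * π q.2 p.1 * pderiv q.1 h * pderiv p.2 (pderiv q.2 g) * pderiv p.1 f)
  simp only [Fintype.sum_prod_type] at key
  rw [← key]
  refine Finset.sum_congr rfl fun a _ => Finset.sum_congr rfl fun b _ =>
    Finset.sum_congr rfl fun c _ => Finset.sum_congr rfl fun j _ => ?_
  rw [hanti b c, hanti a j, pderiv_comm_aux b j]
  ring

theorem nested_aux (π : Fin n → Fin n → MvPolynomial (Fin n) k)
    (hanti : ∀ i j : Fin n, π j i = - π i j) (f g h : MvPolynomial (Fin n) k) :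
    bivectorBracket π f (bivectorBracket π g h)
      = auxT π f g h + auxS π f g h - auxS π f h g := by
  have e : auxS π f h g = ∑ a : Fin n, ∑ b : Fin n, ∑ c : Fin n, ∑ j : Fin n,
      π a j * π c b * pderiv a f * pderiv j (pderiv c h) * pderiv b g := by
    unfold auxS
    exact Finset.sum_congr rfl fun a _ => Finset.sum_comm
  rw [e]
  unfold bivectorBracket auxT auxS
  simp only [← Finset.sum_add_distrib, ← Finset.sum_sub_distrib, map_sum, Finset.mul_sum]
  refine Finset.sum_congr rfl fun a _ => ?_
  rw [Finset.sum_comm]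
  refine Finset.sum_congr rfl fun b _ => ?_
  rw [Finset.sum_comm]
  refine Finset.sum_congr rfl fun c _ => ?_
  refine Finset.sum_congr rfl fun j _ => ?_
  rw [hanti b c]
  simp only [Derivation.leibniz, smul_eq_mul]
  ring

theorem sum_rot_aux (F : Fin n → Fin n → Fin n → MvPolynomial (Fin n) k) :
    ∑ a, ∑ b, ∑ c, F a b c = ∑ c, ∑ a, ∑ b, F a b c := by
  rw [Finset.sum_comm (s := Finset.univ (α := Fin n)) (f := fun c a => ∑ b, F a b c)]
  exact Finset.sum_congr rfl fun a _ => Finset.sum_comm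

end Aux

/-- For an antisymmetric bivector `π`, the Jacobiator of the associated
bracket is given by the Schouten trivector contracted with the first derivatives of the
arguments. -/
theorem jacobiator_formula
    (k : Type*) [CommRing k] (n : ℕ)
    (π : Fin n → Fin n → MvPolynomial (Fin n) k)
    (hanti : ∀ i j : Fin n, π j i = - π i j) :
    ∀ f g h : MvPolynomial (Fin n) k,
      bivectorBracket π f (bivectorBracket π g h)
        + bivectorBracket π g (bivectorBracket π h f)
        + bivectorBracket π h (bivectorBracket π f g)
      = ∑ a : Fin n, ∑ b : Fin n, ∑ c : Fin n,
          schoutenTrivector π a b c * pderiv a f * pderiv b g * pderiv c h := by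
  intro f g h
  rw [nested_aux π hanti, nested_aux π hanti, nested_aux π hanti,
    auxS_symm π hanti h g f, auxS_symm π hanti g f h, auxS_symm π hanti f h g]
  have e1 : auxT π g h f = ∑ a : Fin n, ∑ b : Fin n, ∑ c : Fin n, ∑ j : Fin n,
      π b j * pderiv j (π c a) * pderiv b g * pderiv c h * pderiv a f := by
    unfold auxT
    exact sum_rot_aux _
  have e2 : auxT π h f g = ∑ a : Fin n, ∑ b : Fin n, ∑ c : Fin n, ∑ j : Fin n,
      π c j * pderiv j (π a b) * pderiv c h * pderiv a f * pderiv b g := by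
    unfold auxT
    exact (sum_rot_aux _).trans (sum_rot_aux _)
  have e3 : auxT π f g h + auxT π g h f + auxT π h f g
      = ∑ a : Fin n, ∑ b : Fin n, ∑ c : Fin n,
          schoutenTrivector π a b c * pderiv a f * pderiv b g * pderiv c h := by
    rw [e1, e2]
    unfold auxT schoutenTrivector
    simp only [← Finset.sum_add_distrib, Finset.sum_mul]
    refine Finset.sum_congr rfl fun a _ => Finset.sum_congr rfl fun b _ =>
      Finset.sum_congr rfl fun c _ => Finset.sum_congr rfl fun j _ => ?_
    ring
  rw [← e3]
  ring
end

section
/- Let k be a commutative ring, n a natural number, and π : Fin n → Fin n → MvPolynomial (Fin n) k an antisymmetric matrix of polynomials satisfying the Schouten condition. Let ι : MvPolynomial (Fin n) k → MvPolynomial (Fin (n+1)) k be the ring homomorphism renaming variables along Fin.castSucc, and let ħ := X (Fin.last n) be the last variable. Define π̃ : Fin (n+1) → Fin (n+1) → MvPolynomial (Fin (n+1)) k by π̃ (Fin.castSucc i) (Fin.castSucc j) := ħ * ι (π i j), and π̃ i' j' := 0 whenever i' = Fin.last n or j' = Fin.last n. Then π̃ is antisymmetric, satisfies the Schouten condition on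 affine (n+1)-space, and every entry π̃ i' j' has zero constant coefficient. -/
open MvPolynomial

/-- Multiplying a Poisson bivector `π` on affine `n`-space by the extra
coordinate `ħ = x_{n+1}` yields a pointed Poisson bivector `π̃` on affine `(n+1)`-space:
`π̃` is antisymmetric, satisfies the Schouten condition, and all its entries vanish at
the origin. -/
theorem pointed_extension_of_poisson
    (k : Type*) [CommRing k] (n : ℕ)
    (π : Fin n → Fin n → MvPolynomial (Fin n) k)
    (hanti : ∀ i j : Fin n, π j i = - π i j)
    (hschouten : ∀ a b c : Fin n,
      ∑ j : Fin n,
        (π a j * pderiv j (π b c) + π b j * pderiv j (π c a)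
          + π c j * pderiv j (π a b)) = 0)
    (πt : Fin (n + 1) → Fin (n + 1) → MvPolynomial (Fin (n + 1)) k)
    (hπt_cast : ∀ i j : Fin n,
      πt i.castSucc j.castSucc
        = X (Fin.last n) * rename (Fin.castSucc : Fin n → Fin (n + 1)) (π i j))
    (hπt_last : ∀ i' j' : Fin (n + 1),
      i' = Fin.last n ∨ j' = Fin.last n → πt i' j' = 0) :
    (∀ i' j' : Fin (n + 1), πt j' i' = - πt i' j') ∧
    (∀ a b c : Fin (n + 1),
      ∑ j : Fin (n + 1),
        (πt a j * pderiv j (πt b c) + πt b j * pderiv j (πt c a)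
          + πt c j * pderiv j (πt a b)) = 0) ∧
    (∀ i' j' : Fin (n + 1), constantCoeff (πt i' j') = 0) := by
  have hl : ∀ j, πt (Fin.last n) j = 0 := fun j => hπt_last _ _ (Or.inl rfl)
  have hr : ∀ j, πt j (Fin.last n) = 0 := fun j => hπt_last _ _ (Or.inr rfl)
  refine ⟨fun i j => ?_, fun a b c => ?_, fun i j => ?_⟩
  · cases i using Fin.lastCases with
    | last => simp [hl, hr]
    | cast i =>
      cases j using Fin.lastCases with
      | last => simp [hl, hr]
      | cast j => rw [hπt_cast, hπt_cast, hanti i j, map_neg, mul_neg]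
  · cases a using Fin.lastCases with
    | last => simp [hl, hr]
    | cast a =>
      cases b using Fin.lastCases with
      | last => simp [hl, hr]
      | cast b =>
        cases c using Fin.lastCases with
        | last => simp [hl, hr]
        | cast c =>
          have hd : ∀ j p q : Fin n, pderiv j.castSucc (πt p.castSucc q.castSucc)
              = X (Fin.last n) * rename (Fin.castSucc : Fin n → Fin (n + 1))
                  (pderiv j (π p q)) := by
            intro j p q
            rw [hπt_cast, pderiv_mul, pderiv_X_of_ne (Fin.castSucc_lt_last j).ne',
              pderiv_rename (Fin.castSucc_injective n), zero_mul, zero_add]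
          have h := congrArg (fun p => X (Fin.last n) ^ 2 *
            rename (Fin.castSucc : Fin n → Fin (n + 1)) p) (hschouten a b c)
          simp only [map_zero, mul_zero, map_sum, Finset.mul_sum] at h
          rw [Fin.sum_univ_castSucc]
          simp only [hr, zero_mul, add_zero]
          rw [← h]
          refine Finset.sum_congr rfl fun j _ => ?_
          simp only [hd]
          simp only [hπt_cast, map_add, map_mul]
          ring
  · cases i using Fin.lastCases with
    | last => simp [hl]
    | cast i =>
      cases j using Fin.lastCases with
      | last => simp [hr]
      | cast j => simp [hπt_cast]
end
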